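/- Let f : 𝔹^N → 𝔹^N. The map G_f is chaotic in the sense of Devaney on the metric space (X,d) if and only if the asynchronous iteration graph Γ(f) is strongly connected. -/

import Mathlib

/-!
The distance `dX` separates Boolean states by at least `1`, so a distance `< 1` forces equality of
the states, while sequences sharing a long prefix are arbitrarily close (`exists_dS_lt_of_agree`).

Transitivity between `(S, x)` and `(S, y)` at scale `1` thus produces a strategy driving `x` to `y`,
i.e. a path in the graph. Conversely, given `(S, x)`, follow a long prefix of `S` and let `x'` be the
state reached. Strong connectivity gives a word leading from `x'` to any desired state `y`. Appending
this word and then any strategy `T` gives a point close to `(S, x)` with `(T, y)` in its orbit, hence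
transitivity. With `y = x`, repeating the prefix and the word forever gives a periodic point close to
`(S, x)`. Both constructions rest on `iterate_Gf_splice`.
-/

/-- Hamming distance on 𝔹^N : d_e(E,E') = Σ_k δ(E_k, E'_k), δ the discrete Boolean metric. -/
noncomputable def dE (N : ℕ) (E E' : Fin N → Bool) : ℝ :=
  ∑ k : Fin N, if E k = E' k then 0 else 1

/-- d_s(S,S') = (9/N) Σ_{k=1}^∞ |S^k − S'^k| / 10^k (sequences indexed from 0 in Lean). -/
noncomputable def dS (N : ℕ) (S S' : ℕ → Fin N) : ℝ :=
  (9 / N) * ∑' k : ℕ, |((S k : ℕ) : ℝ) - ((S' k : ℕ) : ℝ)| / 10 ^ (k + 1)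

/-- d((S,E),(S',E')) = d_e(E,E') + d_s(S,S') on X = ⟦1,N⟧^ℕ × 𝔹^N.
    (Points of X are stored as pairs (S, E).) -/
noncomputable def dX (N : ℕ) (X Y : (ℕ → Fin N) × (Fin N → Bool)) : ℝ :=
  dE N X.2 Y.2 + dS N X.1 Y.1

/-- F_f(k,E) : the k-th component is replaced by f(E)_k, the others are unchanged. -/
def Ff (N : ℕ) (f : (Fin N → Bool) → Fin N → Bool) (k : Fin N) (E : Fin N → Bool) :
    Fin N → Bool :=
  fun j => if j = k then f E j else E j

/-- G_f(S,E) = (σ(S), F_f(S^0,E)), where σ is the shift. -/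
def Gf (N : ℕ) (f : (Fin N → Bool) → Fin N → Bool)
    (X : (ℕ → Fin N) × (Fin N → Bool)) : (ℕ → Fin N) × (Fin N → Bool) :=
  (fun n => X.1 (n + 1), Ff N f (X.1 0) X.2)

/-- The vectorial Boolean negation. -/
def negAll (N : ℕ) : (Fin N → Bool) → Fin N → Bool := fun x i => !(x i)

/-- The asynchronous iteration graph Γ(f) is strongly connected: every vertex of 𝔹^N is
    reachable from every other along arcs x → F_f(i,x). -/
def stronglyConnected (N : ℕ) (f : (Fin N → Bool) → Fin N → Bool) : Prop :=
  ∀ x y : Fin N → Bool, Relation.ReflTransGen (fun a b => ∃ i : Fin N, Ff N f i a = b) x y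

/-- The strategy that follows `S` for `n` steps and then starts `T` from its beginning. -/
def splice {N : ℕ} (n : ℕ) (S T : ℕ → Fin N) : ℕ → Fin N :=
  fun k => if k < n then S k else T (k - n)

/-- Following the first `n` letters of `S` and then `T` reaches, after `n` steps, the state that
`S` itself reaches, with `T` left to be executed. -/
lemma iterate_Gf_splice {N : ℕ} (f : (Fin N → Bool) → Fin N → Bool) (n : ℕ)
    (S T : ℕ → Fin N) (x : Fin N → Bool) :
    (Gf N f)^[n] (splice n S T, x) = (T, ((Gf N f)^[n] (S, x)).2) := by
  induction n generalizing S x with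
  | zero => rfl
  | succ n ih =>
    have h : Gf N f (splice (n + 1) S T, x)
        = (splice n (fun k => S (k + 1)) T, Ff N f (S 0) x) := by
      simp [Gf, funext_iff, splice]
    rw [Function.iterate_succ_apply, Function.iterate_succ_apply, h, ih]
    rfl

lemma reachable_iterate {N : ℕ} (f : (Fin N → Bool) → Fin N → Bool) (n : ℕ)
    (X : (ℕ → Fin N) × (Fin N → Bool)) :
    Relation.ReflTransGen (fun a b => ∃ i : Fin N, Ff N f i a = b) X.2 ((Gf N f)^[n] X).2 := by
  induction n with
  | zero => exact .refl
  | succ n ih =>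
    rw [Function.iterate_succ_apply']
    exact ih.tail ⟨_, rfl⟩

/-- A path in the graph is realised by a strategy; `S₀` only serves to complete the finite word
labelling the path into an infinite sequence. -/
lemma exists_strategy {N : ℕ} {f : (Fin N → Bool) → Fin N → Bool} {x y : Fin N → Bool}
    (S₀ : ℕ → Fin N)
    (h : Relation.ReflTransGen (fun a b => ∃ i : Fin N, Ff N f i a = b) x y) :
    ∃ (m : ℕ) (U : ℕ → Fin N), ((Gf N f)^[m] (U, x)).2 = y := by
  induction h with
  | refl => exact ⟨0, S₀, rfl⟩
  | tail _ hbc ih =>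
    obtain ⟨m, U, rfl⟩ := ih
    obtain ⟨i, rfl⟩ := hbc
    refine ⟨m + 1, splice m U fun _ => i, ?_⟩
    rw [Function.iterate_succ_apply', iterate_Gf_splice]
    rfl

lemma dE_self {N : ℕ} (x : Fin N → Bool) : dE N x x = 0 := by simp [dE]

lemma dS_self {N : ℕ} (S : ℕ → Fin N) : dS N S S = 0 := by simp [dS]

lemma dS_nonneg {N : ℕ} (S T : ℕ → Fin N) : 0 ≤ dS N S T :=
  mul_nonneg (by positivity) (tsum_nonneg fun _ => by positivity)

lemma eq_of_dX_lt_one {N : ℕ} {X Y : (ℕ → Fin N) × (Fin N → Bool)} (h : dX N X Y < 1) :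
    X.2 = Y.2 := by
  by_contra hne
  obtain ⟨k, hk⟩ := Function.ne_iff.mp hne
  have h1 : (1 : ℝ) ≤ dE N X.2 Y.2 := by
    have := Finset.single_le_sum (f := fun k => if X.2 k = Y.2 k then (0 : ℝ) else 1)
      (fun i _ => by split_ifs <;> norm_num) (Finset.mem_univ k)
    simpa [dE, hk] using this
  have := dS_nonneg X.1 Y.1
  unfold dX at h
  linarith

/-- Strategies sharing their first `n` letters are at distance at most `10⁻ⁿ`. -/
lemma dS_le_of_agree {N : ℕ} (hN : 1 ≤ N) (n : ℕ) (S T : ℕ → Fin N)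
    (h : ∀ k < n, S k = T k) : dS N S T ≤ (1 / 10) ^ n := by
  have hN0 : (0 : ℝ) < N := by exact_mod_cast hN
  have hterm : ∀ k, |((S k : ℕ) : ℝ) - ((T k : ℕ) : ℝ)| / 10 ^ (k + 1)
      ≤ (N / 10 : ℝ) * (1 / 10) ^ k := by
    intro k
    have hs : ((S k : ℕ) : ℝ) ≤ N := by exact_mod_cast (S k).2.le
    have ht : ((T k : ℕ) : ℝ) ≤ N := by exact_mod_cast (T k).2.le
    have habs : |((S k : ℕ) : ℝ) - ((T k : ℕ) : ℝ)| ≤ N := by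
      rw [abs_le]
      constructor <;> linarith [Nat.cast_nonneg (α := ℝ) (S k : ℕ),
        Nat.cast_nonneg (α := ℝ) (T k : ℕ)]
    calc _ ≤ (N : ℝ) / 10 ^ (k + 1) := by gcongr
      _ = _ := by rw [pow_succ, div_pow, one_pow]; field_simp
  have hgeom : Summable fun k : ℕ => (N / 10 : ℝ) * (1 / 10) ^ k :=
    (summable_geometric_of_lt_one (by norm_num) (by norm_num)).mul_left _
  have hsum := Summable.of_nonneg_of_le (fun k => by positivity) hterm hgeom
  have hhead : ∑ k ∈ Finset.range n, |((S k : ℕ) : ℝ) - ((T k : ℕ) : ℝ)| / 10 ^ (k + 1) = 0 :=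
    Finset.sum_eq_zero fun k hk => by simp [h k (Finset.mem_range.mp hk)]
  have hgeom' : HasSum (fun k : ℕ => (N / 10 : ℝ) * (1 / 10) ^ (k + n))
      (N / 9 * (1 / 10) ^ n) := by
    have := (hasSum_geometric_of_lt_one (r := (1 / 10 : ℝ)) (by norm_num) (by norm_num)).mul_left
      ((N / 10 : ℝ) * (1 / 10) ^ n)
    have hfun : (fun k : ℕ => (N / 10 : ℝ) * (1 / 10) ^ (k + n))
        = fun k => (N / 10 : ℝ) * (1 / 10) ^ n * (1 / 10) ^ k := by
      funext k; ring
    have hval : (N / 9 : ℝ) * (1 / 10) ^ n = N / 10 * (1 / 10) ^ n * (1 - 1 / 10)⁻¹ := by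
      norm_num; ring
    rw [hfun, hval]
    exact this
  have htail := ((summable_nat_add_iff n).mpr hsum).tsum_le_tsum
    (fun k => hterm (k + n)) hgeom'.summable
  rw [hgeom'.tsum_eq] at htail
  unfold dS
  rw [← hsum.sum_add_tsum_nat_add n, hhead, zero_add]
  calc _ ≤ (9 / N : ℝ) * (N / 9 * (1 / 10) ^ n) := by gcongr
    _ = _ := by field_simp

lemma exists_dS_lt_of_agree {N : ℕ} (hN : 1 ≤ N) {ε : ℝ} (hε : 0 < ε) :
    ∃ n > 0, ∀ S T : ℕ → Fin N, (∀ k < n, S k = T k) → dS N S T < ε := by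
  obtain ⟨n, hn⟩ := exists_pow_lt_of_lt_one hε (show (1 / 10 : ℝ) < 1 by norm_num)
  refine ⟨n + 1, n.succ_pos, fun S T h => ?_⟩
  exact (dS_le_of_agree hN n S T fun k hk => h k (by omega)).trans_lt hn

/- STATEMENT 6: G_f is chaotic in the sense of Devaney on (X,d) (regular and topologically
   transitive, both expressed with the metric d) if and only if Γ(f) is strongly connected. -/
theorem Gf_chaotic_iff_stronglyConnected (N : ℕ) (hN : 1 ≤ N)
    (f : (Fin N → Bool) → Fin N → Bool) :
    ((∀ X : (ℕ → Fin N) × (Fin N → Bool), ∀ ε > (0 : ℝ),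
      ∃ P : (ℕ → Fin N) × (Fin N → Bool),
        dX N X P < ε ∧ ∃ n > 0, (Gf N f)^[n] P = P) ∧
     (∀ X Y : (ℕ → Fin N) × (Fin N → Bool), ∀ ε₁ > (0 : ℝ), ∀ ε₂ > (0 : ℝ),
      ∃ Z : (ℕ → Fin N) × (Fin N → Bool),
        dX N X Z < ε₁ ∧ ∃ k > 0, dX N ((Gf N f)^[k] Z) Y < ε₂))
    ↔ stronglyConnected N f := by
  constructor
  · rintro ⟨-, htrans⟩ x y
    let S : ℕ → Fin N := fun _ => ⟨0, hN⟩
    obtain ⟨Z, hZ, k, -, hk⟩ := htrans (S, x) (S, y) 1 one_pos 1 one_pos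
    have hx : x = Z.2 := eq_of_dX_lt_one hZ
    have hy : ((Gf N f)^[k] Z).2 = y := eq_of_dX_lt_one hk
    rw [hx, ← hy]
    exact reachable_iterate f k Z
  · intro hconn
    refine ⟨?_, ?_⟩
    · rintro ⟨S, x⟩ ε hε
      obtain ⟨n, hn, hclose⟩ := exists_dS_lt_of_agree hN hε
      obtain ⟨m, U, hU⟩ := exists_strategy S (hconn ((Gf N f)^[n] (S, x)).2 x)
      let V : ℕ → Fin N := fun k => splice n S U (k % (m + n))
      have hV : V = splice (m + n) (splice n S U) V := by
        funext k
        rcases lt_or_ge k (m + n) with hk | hk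
        · simp [V, splice, hk, Nat.mod_eq_of_lt hk]
        · have hmod : k % (m + n) = (k - (m + n)) % (m + n) := Nat.mod_eq_sub_mod hk
          have hR : splice (m + n) (splice n S U) V k = V (k - (m + n)) := if_neg hk.not_gt
          rw [hR]
          exact congrArg (splice n S U) hmod
      refine ⟨(V, x), ?_, m + n, by omega, ?_⟩
      · have := hclose S V fun k hk => by
          simp [V, splice, Nat.mod_eq_of_lt (show k < m + n by omega), hk]
        simpa [dX, dE_self] using this
      -- One period of `V` is the loop at `x` labelled by the prefix of `S` and the word of `U`.
      · conv_lhs => rw [hV]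
        rw [iterate_Gf_splice, Function.iterate_add_apply, iterate_Gf_splice, hU]
    · rintro ⟨S, x⟩ ⟨T, y⟩ ε₁ hε₁ ε₂ hε₂
      obtain ⟨n, hn, hclose⟩ := exists_dS_lt_of_agree hN hε₁
      obtain ⟨m, U, hU⟩ := exists_strategy S (hconn ((Gf N f)^[n] (S, x)).2 y)
      refine ⟨(splice n S (splice m U T), x), ?_, m + n, by omega, ?_⟩
      · have := hclose S (splice n S (splice m U T)) fun k hk => by simp [splice, hk]
        simpa [dX, dE_self] using this
      · rw [Function.iterate_add_apply, iterate_Gf_splice, iterate_Gf_splice, hU]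
        simpa [dX, dE_self, dS_self] using hε₂
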